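/- Let G be a graph of order m ≥ 3 and size e with χ(G) = χ_la(G) = t. Suppose there exists a local antimagic labeling f of G with c(f) = t. Let n ≥ 2 be an integer with m ≡ n (mod 2). If f⁺(u) ≠ (m−n)(2e+mn+1)/2 for every vertex u of G, then χ_la(G ∨ O_n) = χ_la(G) + 1. -/

import Mathlib

open Finset SimpleGraph
open scoped Classical

/-- The induced vertex label (weight) of `x`: the sum of `f` over all edges incident to `x`. -/
noncomputable def vertexWeight {V : Type*} [Fintype V] (G : SimpleGraph V)
    (f : Sym2 V → ℕ) (x : V) : ℕ :=
  ∑ e ∈ G.edgeFinset.filter (fun e => x ∈ e), f e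

/-- `f` is a local antimagic labeling of `G`: it restricts to a bijection from the edge set of
`G` onto `{1, …, q}` (where `q` is the number of edges), and adjacent vertices get distinct
induced vertex labels. -/
def IsLocalAntimagic {V : Type*} [Fintype V] (G : SimpleGraph V) (f : Sym2 V → ℕ) : Prop :=
  Set.BijOn f G.edgeSet (Set.Icc 1 G.edgeSet.ncard) ∧
  ∀ ⦃x y : V⦄, G.Adj x y → vertexWeight G f x ≠ vertexWeight G f y

/-- The number of distinct induced vertex labels, `c(f)`. -/
noncomputable def colorCount {V : Type*} [Fintype V] (G : SimpleGraph V)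
    (f : Sym2 V → ℕ) : ℕ :=
  (Finset.univ.image (vertexWeight G f)).card

/-- The local antimagic chromatic number `χ_la(G)`. -/
noncomputable def chiLA {V : Type*} [Fintype V] (G : SimpleGraph V) : ℕ :=
  sInf { n | ∃ f : Sym2 V → ℕ, IsLocalAntimagic G f ∧ colorCount G f = n }

/-- The join `G ∨ H` of two vertex-disjoint graphs. -/
def joinG {α β : Type*} (G : SimpleGraph α) (H : SimpleGraph β) : SimpleGraph (α ⊕ β) :=
  SimpleGraph.fromRel (fun x y =>
    (∃ a b, x = Sum.inl a ∧ y = Sum.inl b ∧ G.Adj a b) ∨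
    (∃ a b, x = Sum.inr a ∧ y = Sum.inr b ∧ H.Adj a b) ∨
    (∃ a b, x = Sum.inl a ∧ y = Sum.inr b))

/-!
Number the edges of `G` by `f` and the `m * n` cross edges of the join by `e + 1, …, e + m * n`, so
that the labels on the cross edges form a magic rectangle. The constant row sums shift all labels
`f⁺` by the same amount, and the constant column sums give all vertices of `O_n` one common label;
the hypothesis on `f⁺` says that it is not one of the shifted ones. Conversely the induced labels
form a proper coloring, and the join needs one more color than `G`.

A magic rectangle is built, centred around zero, by stacking shells: arrays with zero row and column
sums whose entries fill an annulus `M ≤ |x| < M + r * n` of integers of one parity. If `m` and `n`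
are even, `4 × 2` and `2 × 6` blocks suffice. If they are odd, one starts with three or five rows
and adds four rows at a time. Each odd shell arises from bands of consecutive entries with zero
column sums by permutations inside the columns, which are chosen so that the row sums vanish too.
-/

section Shells

variable {R C K R' C' : Type*} [Fintype R] [Fintype C] [Fintype K] [Fintype R'] [Fintype C']

/-- The conditions on a shell (see `IsShell`) other than the vanishing of its row sums. They are
invariant under permuting the entries inside each column. -/
structure IsColumnShell (M : ℕ) (X : R → C → ℤ) : Prop where
  col_sum : ∀ j, ∑ i, X i j = 0
  le_abs : ∀ i j, (M : ℤ) ≤ |X i j|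
  abs_lt : ∀ i j, |X i j| < M + Fintype.card R * Fintype.card C
  odd : ∀ i j, Odd (X i j + M + Fintype.card R * Fintype.card C)
  injective2 : Function.Injective2 X

/-- A *shell* of inner radius `M`: an array with zero row and column sums and distinct entries of
constant parity whose absolute values fill the interval `[M, M + |R| |C|)`. For `M = 0` this is a
centred magic rectangle: halving `X i j + |R| |C| + 1` gives the numbers `1, …, |R| |C|`. -/
structure IsShell (M : ℕ) (X : R → C → ℤ) : Prop extends IsColumnShell M X where
  row_sum : ∀ i, ∑ j, X i j = 0

theorem IsColumnShell.permute {M : ℕ} {X : R → C → ℤ} (hX : IsColumnShell M X)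
    (σ : C → Equiv.Perm R) : IsColumnShell M fun i j ↦ X (σ j i) j where
  col_sum j := (Equiv.sum_comp (σ j) fun i ↦ X i j).trans (hX.col_sum j)
  le_abs _ _ := hX.le_abs _ _
  abs_lt _ _ := hX.abs_lt _ _
  odd _ _ := hX.odd _ _
  injective2 i i' j j' h := by
    obtain ⟨hi, rfl⟩ := hX.injective2 h
    exact ⟨(σ j).injective hi, rfl⟩

namespace IsShell

theorem transpose {M : ℕ} {X : R → C → ℤ} (hX : IsShell M X) :
    IsShell M fun j i ↦ X i j where
  col_sum := hX.row_sum
  row_sum := hX.col_sum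
  le_abs j i := hX.le_abs i j
  abs_lt j i := mul_comm (Fintype.card R : ℤ) _ ▸ hX.abs_lt i j
  odd j i := mul_comm (Fintype.card R : ℤ) _ ▸ hX.odd i j
  injective2 _ _ _ _ h := (hX.injective2 h).symm

theorem reindex {M : ℕ} {X : R → C → ℤ} (hX : IsShell M X) (r : R' ≃ R) (c : C' ≃ C) :
    IsShell M fun i j ↦ X (r i) (c j) where
  col_sum j := (Equiv.sum_comp r fun i ↦ X i (c j)).trans (hX.col_sum _)
  row_sum i := (Equiv.sum_comp c (X (r i))).trans (hX.row_sum _)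
  le_abs _ _ := hX.le_abs _ _
  abs_lt _ _ := by simpa only [Fintype.card_congr r, Fintype.card_congr c] using hX.abs_lt _ _
  odd _ _ := by simpa only [Fintype.card_congr r, Fintype.card_congr c] using hX.odd _ _
  injective2 _ _ _ _ h := (hX.injective2 h).imp (r.injective ·) (c.injective ·)

theorem stack {M : ℕ} {X : R → C → ℤ} {Y : K → C → ℤ} (hX : IsShell M X)
    (hY : IsShell (M + Fintype.card R * Fintype.card C) Y)
    (hK : Even (Fintype.card K * Fintype.card C)) : IsShell M (Sum.elim X Y) := by
  have hcard : ((Fintype.card (R ⊕ K) : ℕ) : ℤ) * Fintype.card C =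
      Fintype.card R * Fintype.card C + Fintype.card K * Fintype.card C := by
    rw [Fintype.card_sum]; push_cast; ring
  have hsep : ∀ i k j j', X i j ≠ Y k j' := by
    intro i k j j' h
    have hlt := hX.abs_lt i j
    have hle := hY.le_abs k j'
    push_cast at hle
    rw [h] at hlt
    exact hlt.not_ge hle
  refine ⟨⟨fun j ↦ ?_, ?_, ?_, ?_, ?_⟩, ?_⟩
  · rw [Fintype.sum_sum_type]
    exact (congrArg₂ (· + ·) (hX.col_sum j) (hY.col_sum j)).trans (add_zero 0)
  · rintro (i | k) j
    · exact hX.le_abs i j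
    · exact (hY.le_abs k j).trans' (by push_cast; exact le_add_of_nonneg_right (by positivity))
  · rw [hcard]
    rintro (i | k) j
    · rw [← add_assoc]
      exact (hX.abs_lt i j).trans_le (le_add_of_nonneg_right (by positivity))
    · simpa only [Sum.elim_inr, Nat.cast_add, Nat.cast_mul, ← add_assoc] using hY.abs_lt k j
  · rw [hcard]
    rintro (i | k) j
    · simpa only [Sum.elim_inl, ← add_assoc] using (hX.odd i j).add_even (by exact_mod_cast hK)
    · simpa only [Sum.elim_inr, Nat.cast_add, Nat.cast_mul, ← add_assoc] using hY.odd k j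
  · rintro (i | k) (i' | k') j j' h
    · exact (hX.injective2 h).imp_left (congrArg _)
    · exact absurd h (hsep i k' j j')
    · exact absurd h.symm (hsep i' k j' j)
    · exact (hY.injective2 h).imp_left (congrArg _)
  · rintro (i | k)
    · exact hX.row_sum i
    · exact hY.row_sum k

end IsShell

/-- There is an `m × n` shell of inner radius `M`. -/
def HasShell (M m n : ℕ) : Prop := ∃ X : Fin m → Fin n → ℤ, IsShell M X

theorem IsShell.hasShell {M m n : ℕ} {X : R → C → ℤ} (hX : IsShell M X)
    (hR : Fintype.card R = m) (hC : Fintype.card C = n) : HasShell M m n :=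
  ⟨_, hX.reindex (Fintype.equivFinOfCardEq hR).symm (Fintype.equivFinOfCardEq hC).symm⟩

namespace HasShell

theorem exists_isShell {M : ℕ} (h : HasShell M (Fintype.card R) (Fintype.card C)) :
    ∃ X : R → C → ℤ, IsShell M X :=
  let ⟨_, hX⟩ := h
  ⟨_, hX.reindex (Fintype.equivFin R) (Fintype.equivFin C)⟩

theorem symm {M m n : ℕ} (h : HasShell M m n) : HasShell M n m :=
  let ⟨_, hX⟩ := h
  ⟨_, hX.transpose⟩

theorem add_rows {M m n k : ℕ} (h : HasShell M m n) (h' : HasShell (M + m * n) k n)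
    (hk : Even (k * n)) : HasShell M (m + k) n := by
  obtain ⟨X, hX⟩ := h
  obtain ⟨Y, hY⟩ := h'
  exact (hX.stack (by simpa using hY) (by simpa using hk)).hasShell (by simp) (by simp)

end HasShell

theorem hasShell_zero_rows (M n : ℕ) : HasShell M 0 n :=
  ⟨nofun, ⟨by simp, nofun, nofun, nofun, nofun⟩, nofun⟩

theorem hasShell_four_two (M : ℕ) : HasShell M 4 2 := by
  refine ⟨![![M + 1, -(M + 1)], ![-(M + 3), M + 3], ![-(M + 5), M + 5], ![M + 7, -(M + 7)]],
    ⟨?_, ?_, ?_, ?_, fun i i' j j' h ↦ ?_⟩, ?_⟩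
  · simp [Fin.forall_fin_succ, Fin.sum_univ_succ]; omega
  · simp [Fin.forall_fin_succ, le_abs]
  · simp [Fin.forall_fin_succ, abs_lt]; omega
  · simp [Fin.forall_fin_succ, Int.odd_iff]; omega
  · fin_cases i <;> fin_cases i' <;> fin_cases j <;> fin_cases j' <;> simp at h ⊢ <;> omega
  · simp [Fin.forall_fin_succ, Fin.sum_univ_succ]

theorem hasShell_four_even (M k : ℕ) : HasShell M 4 (2 * k) := by
  induction k with
  | zero => exact (hasShell_zero_rows M 4).symm
  | succ k ih => exact (ih.symm.add_rows (hasShell_four_two _).symm (by decide)).symm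

theorem HasShell.add_four_mul {m n : ℕ} (h : HasShell 0 m n) (hn : Even n) (k : ℕ) :
    HasShell 0 (m + 4 * k) n := by
  induction k with
  | zero => exact h
  | succ k ih =>
    obtain ⟨l, rfl⟩ := hn.two_dvd
    exact ih.add_rows (hasShell_four_even _ l) ((even_two_mul l).mul_left 4)

theorem hasShell_two_six : HasShell 0 2 6 := by
  refine ⟨![![7, 11, -1, -3, -5, -9], ![-7, -11, 1, 3, 5, 9]],
    ⟨by decide, by decide, by decide, by decide, ?_⟩, by decide⟩
  unfold Function.Injective2
  decide

theorem hasShell_two_mod_four {m n : ℕ} (hm : m % 4 = 2) (hn : n % 4 = 2) (h : 6 ≤ n) :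
    HasShell 0 m n := by
  obtain ⟨k, rfl⟩ : ∃ k, m = 2 + 4 * k := ⟨m / 4, by omega⟩
  obtain ⟨l, rfl⟩ : ∃ l, n = 6 + 4 * l := ⟨(n - 6) / 4, by omega⟩
  have two_left : HasShell 0 2 (6 + 4 * l) := (hasShell_two_six.symm.add_four_mul even_two l).symm
  exact two_left.add_four_mul (Nat.even_iff.mpr (by omega)) k

theorem hasShell_even_even {m n : ℕ} (hm : Even m) (hn : Even n) (h : 4 < m * n) :
    HasShell 0 m n := by
  have four_dvd {m n : ℕ} (hm : 4 ∣ m) (hn : Even n) : HasShell 0 m n := by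
    obtain ⟨k, rfl⟩ := hm
    simpa only [zero_add] using (hasShell_zero_rows 0 n).add_four_mul hn k
  by_cases hm4 : 4 ∣ m
  · exact four_dvd hm4 hn
  by_cases hn4 : 4 ∣ n
  · exact (four_dvd hn4 hm).symm
  replace hm4 : m % 4 = 2 := by grind
  replace hn4 : n % 4 = 2 := by grind
  by_cases hn6 : 6 ≤ n
  · exact hasShell_two_mod_four hm4 hn4 hn6
  · obtain rfl : n = 2 := by omega
    exact (hasShell_two_mod_four hn4 hm4 (by omega)).symm

end Shells


section OddShells

open Equiv (Perm swap)

theorem sum_Icc_neg_succ (f : ℤ → ℤ) (q : ℕ) :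
    ∑ j ∈ Icc (-((q + 1 : ℕ) : ℤ)) (q + 1 : ℕ), f j =
      ∑ j ∈ Icc (-(q : ℤ)) q, f j + (f (q + 1) + f (-(q + 1))) := by
  have h : Icc (-((q + 1 : ℕ) : ℤ)) (q + 1 : ℕ) =
      insert (q + 1 : ℤ) (insert (-(q + 1 : ℤ)) (Icc (-(q : ℤ)) q)) := by
    ext j; simp only [mem_Icc, mem_insert]; omega
  rw [h, sum_insert (by simp; omega), sum_insert (by simp)]
  ring

theorem sum_Icc_neg_of_cancel {f : ℤ → ℤ} {q₀ : ℕ} (r : ℕ)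
    (h : ∀ u : ℕ, q₀ < u → u < q₀ + 2 * r →
      f u + f (-u) + (f (u + 1) + f (-(u + 1))) = 0) :
    ∑ j ∈ Icc (-((q₀ + 2 * r : ℕ) : ℤ)) (q₀ + 2 * r : ℕ), f j =
      ∑ j ∈ Icc (-(q₀ : ℤ)) q₀, f j := by
  induction r with
  | zero => rfl
  | succ r ih =>
    have := h (q₀ + 2 * r + 1) (by omega) (by omega)
    rw [← ih fun u h₁ h₂ ↦ h u h₁ (by omega), mul_add, mul_one, ← add_assoc,
      sum_Icc_neg_succ f (_ + 1), sum_Icc_neg_succ]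
    push_cast at this ⊢
    linarith

theorem sum_Icc_neg_id (q : ℕ) : ∑ j ∈ Icc (-(q : ℤ)) q, j = 0 := by
  induction q with
  | zero => rfl
  | succ q ih => rw [sum_Icc_neg_succ fun j ↦ j, ih]; ring

theorem HasShell.of_perm {M m q : ℕ} {B : Fin m → ℤ → ℤ}
    (hB : IsColumnShell M fun i (j : Icc (-(q : ℤ)) q) ↦ B i j) (π : ℤ → Perm (Fin m))
    (row_sum : ∀ i, ∑ j ∈ Icc (-(q : ℤ)) q, B (π j i) j = 0) : HasShell M m (2 * q + 1) := by
  have hX : IsShell M fun i (j : Icc (-(q : ℤ)) q) ↦ B (π j i) j :=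
    ⟨hB.permute fun j ↦ π j, fun i ↦ (sum_coe_sort _ fun j ↦ B (π j i) j).trans (row_sum i)⟩
  exact hX.hasShell (by simp) (by simp; omega)

/-- The three bands of `2 * [-(3 * q + 1), 3 * q + 1]`, each a permutation of the columns `[-q, q]`,
aligned so that every column sums to zero. -/
def threeBands (q : ℕ) : Fin 3 → ℤ → ℤ :=
  ![fun j ↦ 2 * j, fun j ↦ 2 * (if 0 < j then q + j else 3 * q + 1 + j),
    fun j ↦ 2 * (if 0 < j then -q - 2 * j else -(3 * q + 1) - 2 * j)]

theorem isColumnShell_threeBands (q : ℕ) :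
    IsColumnShell 0 fun i (j : Icc (-(q : ℤ)) q) ↦ threeBands q i j where
  col_sum j := by
    simp only [threeBands, Fin.sum_univ_three, Matrix.cons_val]
    split_ifs <;> ring
  le_abs _ _ := abs_nonneg _
  abs_lt := by
    simp only [threeBands, Subtype.forall, mem_Icc, abs_lt]
    intro i j hj
    fin_cases i <;> simp <;> grind
  odd := by
    simp only [threeBands, Subtype.forall, mem_Icc, Int.odd_iff]
    intro i j hj
    fin_cases i <;> simp <;> grind
  injective2 := by
    rintro i i' ⟨j, hj⟩ ⟨j', hj'⟩ h
    simp only [threeBands, mem_Icc, Subtype.mk.injEq] at hj hj' h ⊢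
    fin_cases i <;> fin_cases i' <;> simp at h ⊢ <;> grind

theorem hasShell_three_of_core {q₀ r : ℕ} (π : ℤ → Perm (Fin 3))
    (hπ : ∀ j, (q₀ : ℤ) < |j| → π j = if Even j then 1 else swap 1 2)
    (core : ∀ i, ∑ j ∈ Icc (-(q₀ : ℤ)) q₀, threeBands (q₀ + 2 * r) (π j i) j = 0) :
    HasShell 0 3 (2 * (q₀ + 2 * r) + 1) := by
  refine .of_perm (isColumnShell_threeBands _) π fun i ↦ ?_
  -- Outside the core the columns `±u`, `±(u + 1)` together contribute zero to each row.
  rw [sum_Icc_neg_of_cancel, core]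
  intro u hu _
  rw [hπ u (by grind), hπ (-u) (by grind), hπ (u + 1) (by grind), hπ (-(u + 1)) (by grind)]
  by_cases h : Even (u : ℤ) <;>
    simp only [even_neg, Int.even_add_one, h, not_true_eq_false, not_false_eq_true, if_true,
      if_false] <;>
    fin_cases i <;> simp [threeBands, Equiv.swap_apply_of_ne_of_ne] <;> grind

theorem hasShell_three_one_mod_four (r : ℕ) : HasShell 0 3 (2 * (2 + 2 * r) + 1) := by
  refine hasShell_three_of_core (fun j ↦ if j = -2 then swap 0 1 else if j = 0 then swap 0 2
    else if Even j then 1 else swap 1 2) (by grind) fun i ↦ ?_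
  rw [show Icc (-((2 : ℕ) : ℤ)) (2 : ℕ) = {-2, -1, 0, 1, 2} by decide]
  fin_cases i <;> simp [threeBands, Equiv.swap_apply_of_ne_of_ne, Int.even_iff] <;> grind

theorem hasShell_three_three_mod_four (r : ℕ) : HasShell 0 3 (2 * (3 + 2 * r) + 1) := by
  refine hasShell_three_of_core (fun j ↦ if j = 0 then finRotate 3
    else if j = -1 ∨ j = 1 then swap 0 2 else if j = 2 then swap 0 1
    else if Even j then 1 else swap 1 2) (by grind) fun i ↦ ?_
  rw [show Icc (-((3 : ℕ) : ℤ)) (3 : ℕ) = {-3, -2, -1, 0, 1, 2, 3} by decide]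
  fin_cases i <;> simp [threeBands, Equiv.swap_apply_of_ne_of_ne, Int.even_iff] <;> grind

theorem hasShell_three_three : HasShell 0 3 3 := by
  refine ⟨![![6, -4, -2], ![-8, 0, 8], ![2, 4, -6]],
    ⟨by decide, by decide, by decide, by decide, ?_⟩, by decide⟩
  unfold Function.Injective2
  decide

theorem hasShell_three_odd {q : ℕ} (hq : 1 ≤ q) : HasShell 0 3 (2 * q + 1) := by
  rcases Nat.even_or_odd' q with ⟨r, rfl | rfl⟩
  · obtain ⟨r, rfl⟩ : ∃ r', r = r' + 1 := ⟨r - 1, by omega⟩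
    convert hasShell_three_one_mod_four r using 2; ring
  · rcases r with _ | r
    · exact hasShell_three_three
    · convert hasShell_three_three_mod_four r using 2; ring

theorem exists_sum_eq_neg_two_mul_add_one {q : ℕ} (hq : 4 ≤ q) :
    ∃ P ⊆ Icc (-(q : ℤ)) (q - 2), #P = q + 1 ∧ ∑ j ∈ P, j = -(2 * q + 1) := by
  induction q, hq using Nat.le_induction with
  | base => exact ⟨{-4, -3, -2, -1, 1}, by decide, by decide, by decide⟩
  | succ q _ ih =>
    obtain ⟨P, hP, hcard, hsum⟩ := ih
    have hnew : (q - 1 : ℤ) ∉ P.image (· - 1) := by grind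
    have hinj : Function.Injective fun j : ℤ ↦ j - 1 := sub_left_injective
    refine ⟨insert (q - 1 : ℤ) (P.image (· - 1)), by grind, ?_, ?_⟩
    · rw [card_insert_of_notMem hnew, card_image_of_injective P hinj, hcard]
    · rw [sum_insert hnew, sum_image hinj.injOn, sum_sub_distrib, hsum, sum_const, hcard]
      simp only [nsmul_eq_mul]
      push_cast
      ring

theorem exists_balanced_half {q : ℕ} (hq : 2 ≤ q) :
    ∃ P ⊆ (Icc (-(q : ℤ)) q).erase 0, #P = q ∧ ∑ j ∈ P, j = 0 := by
  induction q using Nat.twoStepInduction with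
  | zero => omega
  | one => omega
  | more q ih _ =>
    rcases q with _ | _ | q
    · exact ⟨{1, -1}, by decide, by decide, by decide⟩
    · exact ⟨{1, 2, -3}, by decide, by decide, by decide⟩
    · obtain ⟨P, hP, hcard, hsum⟩ := ih (by omega)
      have hpos : (q + 3 : ℤ) ∉ insert (-(q + 3) : ℤ) P := by grind
      have hneg : (-(q + 3) : ℤ) ∉ P := by grind
      refine ⟨insert (q + 3 : ℤ) (insert (-(q + 3) : ℤ) P), by grind, ?_, ?_⟩
      · rw [card_insert_of_notMem hpos, card_insert_of_notMem hneg, hcard]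
      · rw [sum_insert hpos, sum_insert hneg, hsum]; ring

/-- Two opposite bands: the columns of a two-row shell, before exchanges inside the columns. -/
def twoBands (N : ℕ) : Fin 2 → ℤ → ℤ :=
  ![fun j ↦ 2 * (N + j), fun j ↦ -(2 * (N + j))]

/-- Two consecutive pairs of opposite bands of `n` numbers each: the columns of a four-row shell,
before exchanges inside the columns. -/
def fourBands (N n : ℕ) : Fin 4 → ℤ → ℤ :=
  ![fun j ↦ 2 * (N + j), fun j ↦ -(2 * (N + j)), fun j ↦ -(2 * (N + n + j)),
    fun j ↦ 2 * (N + n + j)]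

theorem isColumnShell_twoBands {M N q : ℕ} (hN : M + (2 * q + 1) = 2 * N) :
    IsColumnShell M fun i (j : Icc (-(q : ℤ)) q) ↦ twoBands N i j where
  col_sum j := by simp [twoBands]
  le_abs := by
    simp only [twoBands, Subtype.forall, mem_Icc, le_abs]
    intro i j hj
    fin_cases i <;> simp <;> omega
  abs_lt := by
    simp only [twoBands, Subtype.forall, mem_Icc, abs_lt]
    intro i j hj
    fin_cases i <;> simp <;> omega
  odd := by
    simp only [twoBands, Subtype.forall, mem_Icc, Int.odd_iff]
    intro i j _
    fin_cases i <;> simp <;> omega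
  injective2 := by
    rintro i i' ⟨j, hj⟩ ⟨j', hj'⟩ h
    simp only [twoBands, mem_Icc, Subtype.mk.injEq] at hj hj' h ⊢
    fin_cases i <;> fin_cases i' <;> simp at h ⊢ <;> omega

theorem isColumnShell_fourBands {M N q : ℕ} (hN : M + (2 * q + 1) = 2 * N) :
    IsColumnShell M fun i (j : Icc (-(q : ℤ)) q) ↦ fourBands N (2 * q + 1) i j where
  col_sum j := by simp [fourBands, Fin.sum_univ_four]
  le_abs := by
    simp only [fourBands, Subtype.forall, mem_Icc, le_abs]
    intro i j hj
    fin_cases i <;> simp <;> omega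
  abs_lt := by
    simp only [fourBands, Subtype.forall, mem_Icc, abs_lt]
    intro i j hj
    fin_cases i <;> simp <;> omega
  odd := by
    simp only [fourBands, Subtype.forall, mem_Icc, Int.odd_iff]
    intro i j _
    fin_cases i <;> simp <;> omega
  injective2 := by
    rintro i i' ⟨j, hj⟩ ⟨j', hj'⟩ h
    simp only [fourBands, mem_Icc, Subtype.mk.injEq] at hj hj' h ⊢
    fin_cases i <;> fin_cases i' <;> simp at h ⊢ <;> omega

theorem sum_ite_mem_neg {ι : Type*} [DecidableEq ι] {P S : Finset ι} (h : P ⊆ S) (f : ι → ℤ) :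
    ∑ j ∈ S, (if j ∈ P then f j else -f j) = 2 * ∑ j ∈ P, f j - ∑ j ∈ S, f j := by
  have hite (j : ι) : (if j ∈ P then f j else -f j) = 2 * (if j ∈ P then f j else 0) - f j := by
    split_ifs <;> ring
  rw [sum_congr rfl fun j _ ↦ hite j, sum_sub_distrib, ← mul_sum, sum_ite_mem,
    inter_eq_right.mpr h]

theorem card_Icc_neg (q : ℕ) : #(Icc (-(q : ℤ)) q) = 2 * q + 1 := by
  rw [Int.card_Icc]; omega

theorem hasShell_two_odd {q : ℕ} (hq : 4 ≤ q) : HasShell (3 * (2 * q + 1)) 2 (2 * q + 1) := by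
  obtain ⟨P, hP, hcard, hsum⟩ := exists_sum_eq_neg_two_mul_add_one hq
  set N := 2 * (2 * q + 1) with hN
  have hPq : P ⊆ Icc (-(q : ℤ)) q := hP.trans (Icc_subset_Icc_right (by omega))
  have signed_sum :
      ∑ j ∈ Icc (-(q : ℤ)) q, (if j ∈ P then 2 * (N + j) else -(2 * (N + j))) = 0 := by
    rw [sum_ite_mem_neg hPq fun j ↦ 2 * (N + j), ← mul_sum, ← mul_sum, sum_add_distrib,
      sum_add_distrib, sum_Icc_neg_id, hsum]
    simp only [hN, sum_const, hcard, card_Icc_neg, nsmul_eq_mul]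
    push_cast
    ring
  refine .of_perm (isColumnShell_twoBands (N := N) (by omega))
    (fun j ↦ if j ∈ P then 1 else swap 0 1) (Fin.forall_fin_two.mpr ⟨?_, ?_⟩)
  · rw [← signed_sum]
    refine sum_congr rfl fun j _ ↦ ?_
    split_ifs <;> simp [twoBands]
  · rw [← neg_eq_zero, ← signed_sum, ← sum_neg_distrib]
    refine sum_congr rfl fun j _ ↦ ?_
    split_ifs <;> simp [twoBands]

/-- The exchange of bands in column `j` of a four-row shell. The columns in `P` keep their signs,
the others reverse them; column `0` leaves an imbalance in each row, which is made up by exchanging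
the two negative bands in the columns of `A ⊆ P` and of `D`. -/
def bandExchange (P A D : Finset ℤ) (j : ℤ) : Perm (Fin 4) :=
  if j = 0 then swap 1 3
  else if j ∈ A then swap 1 2
  else if j ∈ P then 1
  else if j ∈ D then swap 1 2 * (swap 0 1 * swap 2 3)
  else swap 0 1 * swap 2 3

theorem fourBands_bandExchange (N n : ℕ) {P A D : Finset ℤ} (h0 : 0 ∉ P) (hA : A ⊆ P)
    (hD : ∀ j ∈ D, j ≠ 0 ∧ j ∉ P) (i : Fin 4) (j : ℤ) :
    fourBands N n (bandExchange P A D j i) j =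
      ![-2 * (N + j), 2 * (N + j), 2 * (N + n + j), -2 * (N + n + j)] i +
      (if j ∈ P then ![4 * (N + j), -4 * (N + j), -4 * (N + n + j), 4 * (N + n + j)] i else 0) +
      (if j ∈ ({0} : Finset ℤ) then ![4 * (N : ℤ), 2 * n, -4 * (N + n), 2 * n] i else 0) +
      (if j ∈ A then ![0, -2 * (n : ℤ), 2 * n, 0] i else 0) +
      (if j ∈ D then ![-2 * (n : ℤ), 0, 0, 2 * n] i else 0) := by
  by_cases hj0 : j = 0
  · have hj : 0 ∉ A ∧ 0 ∉ D := by grind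
    fin_cases i <;>
      simp [bandExchange, fourBands, h0, hj, hj0, Equiv.swap_apply_of_ne_of_ne] <;> ring
  by_cases hjP : j ∈ P
  · have hjD : j ∉ D := by grind
    by_cases hjA : j ∈ A <;> fin_cases i <;>
      simp [bandExchange, fourBands, hj0, hjP, hjD, hjA, Equiv.swap_apply_of_ne_of_ne] <;> ring
  · have hjA : j ∉ A := by grind
    by_cases hjD : j ∈ D <;> fin_cases i <;>
      simp [bandExchange, fourBands, hj0, hjP, hjD, hjA, Equiv.swap_apply_of_ne_of_ne] <;> ring

theorem hasShell_four_odd {p q : ℕ} (hpq : p + 2 ≤ q) :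
    HasShell ((2 * p + 1) * (2 * q + 1)) 4 (2 * q + 1) := by
  obtain ⟨P, hP, hPcard, hPsum⟩ := exists_balanced_half (q := q) (by omega)
  obtain ⟨A, hAP, hAcard⟩ := exists_subset_card_eq (hpq.trans_eq hPcard.symm)
  obtain ⟨D, hDP, hDcard⟩ : ∃ D ⊆ (Icc (-(q : ℤ)) q).erase 0 \ P, #D = p + 1 := by
    refine exists_subset_card_eq ?_
    rw [card_sdiff_of_subset hP, card_erase_of_mem (by simp), Int.card_Icc, hPcard]
    omega
  have hPq : P ⊆ Icc (-(q : ℤ)) q := hP.trans (erase_subset _ _)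
  have hDq : D ⊆ Icc (-(q : ℤ)) q := hDP.trans (sdiff_subset.trans (erase_subset _ _))
  have h0q : {0} ⊆ Icc (-(q : ℤ)) q := by simp
  have sum_all (c : ℤ) : ∑ j ∈ Icc (-(q : ℤ)) q, (c + j) = (2 * q + 1) * c := by
    rw [sum_add_distrib, sum_const, sum_Icc_neg_id, card_Icc_neg]; simp
  have sum_P (c : ℤ) : ∑ j ∈ P, (c + j) = q * c := by
    rw [sum_add_distrib, sum_const, hPsum, hPcard]; simp
  refine .of_perm (isColumnShell_fourBands (N := (2 * q + 1) * (p + 1)) (by ring))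
    (bandExchange P A D) fun i ↦ ?_
  simp only [fourBands_bandExchange _ _ (P := P) (A := A) (D := D) (by grind) hAP (by grind),
    sum_add_distrib, sum_ite_mem, inter_eq_right.mpr hPq, inter_eq_right.mpr hDq,
    inter_eq_right.mpr (hAP.trans hPq), inter_eq_right.mpr h0q, sum_const, hAcard, hDcard]
  fin_cases i <;> simp [← mul_sum, sum_all, sum_P] <;> ring

theorem hasShell_five_five : HasShell 0 5 5 := by
  refine ⟨![![0, 14, 18, -18, -14], ![12, 16, -20, -6, -2], ![24, -22, -8, -4, 10],
    ![-24, -10, 4, 8, 22], ![-12, 2, 6, 20, -16]],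
    ⟨by decide, by decide, by decide, by decide, ?_⟩, by decide⟩
  unfold Function.Injective2
  decide

theorem hasShell_five_seven : HasShell 0 5 7 := by
  refine ⟨![![-14, 28, -22, -10, 4, -8, 22], ![0, -30, 8, 26, 2, 10, -16],
    ![12, 24, -34, 18, -24, -2, 6], ![34, -4, 16, -28, -12, -20, 14],
    ![-32, -18, 32, -6, 30, 20, -26]],
    ⟨by decide, by decide, by decide, by decide, ?_⟩, by decide⟩
  unfold Function.Injective2
  decide

theorem hasShell_five_odd {q : ℕ} (hq : 2 ≤ q) : HasShell 0 5 (2 * q + 1) := by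
  by_cases h : 4 ≤ q
  · refine (hasShell_three_odd (by omega)).add_rows ?_ (even_two.mul_right _)
    simpa only [zero_add] using hasShell_two_odd h
  · obtain rfl | rfl : q = 2 ∨ q = 3 := by omega
    exacts [hasShell_five_five, hasShell_five_seven]

theorem hasShell_odd_odd {p q : ℕ} (hp : 1 ≤ p) (hpq : p ≤ q) :
    HasShell 0 (2 * p + 1) (2 * q + 1) := by
  induction p using Nat.twoStepInduction with
  | zero => omega
  | one => exact hasShell_three_odd hpq
  | more p ih _ =>
    rcases p.eq_zero_or_pos with rfl | hp
    · exact hasShell_five_odd hpq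
    · have four : HasShell (0 + (2 * p + 1) * (2 * q + 1)) 4 (2 * q + 1) := by
        rw [zero_add]; exact hasShell_four_odd hpq
      simpa only [mul_add, add_right_comm] using
        (ih hp (by omega)).add_rows four (Even.mul_right (by decide) _)

end OddShells

theorem hasShell_of_mod_two_eq {m n : ℕ} (hm : 2 ≤ m) (hn : 2 ≤ n) (hmn : 4 < m * n)
    (hpar : m % 2 = n % 2) : HasShell 0 m n := by
  rcases Nat.even_or_odd' m with ⟨p, rfl | rfl⟩
  · exact hasShell_even_even (even_two_mul p) (Nat.even_iff.mpr (by omega)) hmn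
  · obtain ⟨q, rfl⟩ : ∃ q, n = 2 * q + 1 := ⟨n / 2, by omega⟩
    rcases le_total p q with h | h
    · exact hasShell_odd_odd (by omega) h
    · exact (hasShell_odd_odd (by omega) h).symm

section MagicRectangles

variable {α β : Type*} [Fintype α] [Fintype β]

/-- A magic rectangle filled with the numbers `e + 1, …, e + |α| |β|`. The common values of the row
sums and of the column sums are stated multiplied by two, to avoid a division. -/
structure IsMagicRectangle (e : ℕ) (c : α → β → ℕ) : Prop where
  bijOn : Set.BijOn (Function.uncurry c) Set.univ
    (Set.Icc (e + 1) (e + Fintype.card α * Fintype.card β))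
  two_mul_row_sum : ∀ a, 2 * ∑ b, c a b =
    Fintype.card β * (2 * e + Fintype.card α * Fintype.card β + 1)
  two_mul_col_sum : ∀ b, 2 * ∑ a, c a b =
    Fintype.card α * (2 * e + Fintype.card α * Fintype.card β + 1)

theorem bijOn_univ_of_injective_of_card_le {ι κ : Type*} [Fintype ι] {k : ι → κ} {s : Finset κ}
    (hk : Function.Injective k) (h : ∀ i, k i ∈ s) (hs : #s ≤ Fintype.card ι) :
    Set.BijOn k Set.univ s := by
  have himage : univ.image k = s := by
    refine eq_of_subset_of_card_le (image_subset_iff.mpr fun i _ ↦ h i) ?_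
    rwa [card_image_of_injective _ hk, card_univ]
  simpa only [← himage, coe_image, coe_univ] using hk.injOn.bijOn_image

theorem IsShell.exists_isMagicRectangle {X : α → β → ℤ} (hX : IsShell 0 X) (e : ℕ) :
    ∃ c : α → β → ℕ, IsMagicRectangle e c := by
  have entry (a b) : ∃ k ∈ Icc (e + 1) (e + Fintype.card α * Fintype.card β),
      2 * (k : ℤ) = X a b + (2 * e + Fintype.card α * Fintype.card β + 1) := by
    have hlt := abs_lt.mp (hX.abs_lt a b)
    obtain ⟨l, hl⟩ := hX.odd a b
    set N := (Fintype.card α * Fintype.card β : ℕ) with hN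
    rw [← Nat.cast_mul, ← hN] at hl hlt ⊢
    exact ⟨(e + l + 1).toNat, mem_Icc.mpr (by omega), by omega⟩
  choose c hmem hc using entry
  refine ⟨c, ⟨?_, fun a ↦ ?_, fun b ↦ ?_⟩⟩
  · rw [← coe_Icc]
    refine bijOn_univ_of_injective_of_card_le (fun ⟨a, b⟩ ⟨a', b'⟩ h ↦ ?_)
      (fun ⟨a, b⟩ ↦ hmem a b) ?_
    · have hcast : (c a b : ℤ) = c a' b' := congrArg Nat.cast h
      exact Prod.mk_inj.mpr (hX.injective2 (by linarith [hc a b, hc a' b']))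
    · rw [Nat.card_Icc, Fintype.card_prod]; omega
  · zify
    rw [mul_sum, sum_congr rfl fun b _ ↦ hc a b, sum_add_distrib, hX.row_sum]
    simp
  · zify
    rw [mul_sum, sum_congr rfl fun a _ ↦ hc a b, sum_add_distrib, hX.col_sum]
    simp

end MagicRectangles

section LocalAntimagic

variable {V : Type*} [Fintype V] {G : SimpleGraph V} {f : Sym2 V → ℕ}

theorem vertexWeight_eq_sum (G : SimpleGraph V) (f : Sym2 V → ℕ) (x : V) :
    vertexWeight G f x = ∑ y with G.Adj x y, f s(x, y) := by
  have himage : G.edgeFinset.filter (x ∈ ·) = (univ.filter (G.Adj x)).image (s(x, ·)) := by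
    ext z
    induction z with | _ y z => ?_
    simp only [mem_filter, mem_edgeFinset, mem_edgeSet, Sym2.mem_iff, mem_image, mem_univ, true_and,
      Sym2.eq, Sym2.rel_iff', Prod.mk.injEq, Prod.swap_prod_mk]
    grind [G.adj_comm]
  rw [vertexWeight, himage, sum_image fun _ _ _ _ h ↦ Sym2.congr_right.mp h]

theorem IsLocalAntimagic.chromaticNumber_le (hf : IsLocalAntimagic G f) :
    G.chromaticNumber ≤ colorCount G f := by
  let C : G.Coloring (univ.image (vertexWeight G f)) :=
    Coloring.mk (fun v ↦ ⟨vertexWeight G f v, mem_image_of_mem _ (mem_univ v)⟩)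
      fun h heq ↦ hf.2 h (congrArg Subtype.val heq)
  simpa only [colorCount, Fintype.card_coe] using C.colorable.chromaticNumber_le

theorem IsLocalAntimagic.chiLA_le (hf : IsLocalAntimagic G f) : chiLA G ≤ colorCount G f :=
  Nat.sInf_le ⟨f, hf, rfl⟩

theorem IsLocalAntimagic.chromaticNumber_le_chiLA (hf : IsLocalAntimagic G f) :
    G.chromaticNumber ≤ chiLA G := by
  obtain ⟨g, hg, hcount⟩ : chiLA G ∈ {n | ∃ g, IsLocalAntimagic G g ∧ colorCount G g = n} :=
    Nat.sInf_mem ⟨_, f, hf, rfl⟩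
  exact hcount ▸ hg.chromaticNumber_le

end LocalAntimagic

section Join

variable {α β : Type*} {G : SimpleGraph α} {H : SimpleGraph β}

theorem joinG_adj_inl_inl {a a' : α} : (joinG G H).Adj (.inl a) (.inl a') ↔ G.Adj a a' := by
  simp only [joinG, fromRel_adj]
  grind [G.adj_comm, G.ne_of_adj]

theorem joinG_adj_inr_inr {b b' : β} : (joinG G H).Adj (.inr b) (.inr b') ↔ H.Adj b b' := by
  simp only [joinG, fromRel_adj]
  grind [H.adj_comm, H.ne_of_adj]

theorem joinG_adj_inl_inr (a : α) (b : β) : (joinG G H).Adj (.inl a) (.inr b) := by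
  simp [joinG]

theorem chromaticNumber_add_one_le_chromaticNumber_joinG [Nonempty β] :
    G.chromaticNumber + 1 ≤ (joinG G H).chromaticNumber := by
  obtain ⟨b⟩ := ‹Nonempty β›
  refine le_iInf₂ fun k ⟨C⟩ ↦ ?_
  let D : G.Coloring {i : Fin k // i ≠ C (.inr b)} :=
    Coloring.mk (fun a ↦ ⟨C (.inl a), C.valid (joinG_adj_inl_inr a b)⟩)
      fun h heq ↦ C.valid (joinG_adj_inl_inl.mpr h) (congrArg Subtype.val heq)
  have hcard : Fintype.card {i : Fin k // i ≠ C (.inr b)} + 1 = k := by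
    have := (C (.inr b)).pos
    simp only [ne_eq, Fintype.card_subtype_compl, Fintype.card_fin, Fintype.card_unique]
    omega
  calc G.chromaticNumber + 1 ≤ (Fintype.card {i : Fin k // i ≠ C (.inr b)} : ℕ) + 1 :=
        add_le_add_left D.colorable.chromaticNumber_le 1
    _ = k := mod_cast hcard

/-- The labeling of the edges of a join that is `f` on the edges inside `α` and `c` on the edges
between `α` and `β`; the edges inside `β` get the junk value `0`. -/
def joinLabeling (f : Sym2 α → ℕ) (c : α → β → ℕ) : Sym2 (α ⊕ β) → ℕ :=
  Sym2.lift ⟨fun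
    | .inl a, .inl a' => f s(a, a')
    | .inl a, .inr b => c a b
    | .inr b, .inl a => c a b
    | .inr _, .inr _ => 0, by rintro (a | b) (a' | b') <;> simp [Sym2.eq_swap]⟩

variable {f : Sym2 α → ℕ} {c : α → β → ℕ}

theorem edgeSet_joinG_bot : (joinG G (⊥ : SimpleGraph β)).edgeSet =
    Sym2.map Sum.inl '' G.edgeSet ∪ Set.range fun p : α × β ↦ s(.inl p.1, .inr p.2) := by
  ext z
  induction z with | _ x y => ?_
  rcases x with a | b <;> rcases y with a' | b' <;>
    simp [joinG_adj_inl_inl, joinG_adj_inr_inr, joinG_adj_inl_inr, adj_comm, Sym2.exists]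
  grind [adj_comm]

theorem bijOn_joinLabeling {e N : ℕ} (hf : Set.BijOn f G.edgeSet (Set.Icc 1 e))
    (hc : Set.BijOn (Function.uncurry c) Set.univ (Set.Icc (e + 1) (e + N))) :
    Set.BijOn (joinLabeling f c) (joinG G (⊥ : SimpleGraph β)).edgeSet (Set.Icc 1 (e + N)) := by
  have hinl : Set.BijOn (joinLabeling f c) (Sym2.map Sum.inl '' G.edgeSet) (Set.Icc 1 e) := by
    refine (Set.bijOn_comp_iff (Sym2.map.injective Sum.inl_injective).injOn).mp
      (hf.congr fun z _ ↦ ?_)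
    induction z with | _ a a' => rfl
  have hcross : Set.BijOn (joinLabeling f c)
      (Set.range fun p : α × β ↦ s(.inl p.1, .inr p.2)) (Set.Icc (e + 1) (e + N)) := by
    rw [← Set.image_univ]
    refine (Set.bijOn_comp_iff fun p _ p' _ h ↦ ?_).mp hc
    simpa [Prod.ext_iff] using h
  have hdisj : Disjoint (Set.Icc 1 e) (Set.Icc (e + 1) (e + N)) :=
    Set.disjoint_left.mpr fun k hk hk' ↦ by grind
  rw [edgeSet_joinG_bot, ← show Set.Icc 1 e ∪ Set.Icc (e + 1) (e + N) = Set.Icc 1 (e + N) by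
    ext k; simp only [Set.mem_union, Set.mem_Icc]; omega]
  refine hinl.union hcross ((Set.injOn_union ?_).mpr ⟨hinl.injOn, hcross.injOn, ?_⟩)
  · exact .of_image (hinl.image_eq ▸ hcross.image_eq ▸ hdisj)
  · exact fun z hz w hw ↦ hdisj.ne_of_mem (hinl.mapsTo hz) (hcross.mapsTo hw)

variable [Fintype α] [Fintype β]

theorem vertexWeight_joinLabeling_inl (a : α) :
    vertexWeight (joinG G (⊥ : SimpleGraph β)) (joinLabeling f c) (.inl a) =
      vertexWeight G f a + ∑ b, c a b := by
  simp only [vertexWeight_eq_sum, sum_filter, Fintype.sum_sum_type, joinG_adj_inl_inl,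
    joinG_adj_inl_inr, if_true]
  rfl

theorem vertexWeight_joinLabeling_inr (b : β) :
    vertexWeight (joinG G (⊥ : SimpleGraph β)) (joinLabeling f c) (.inr b) = ∑ a, c a b := by
  simp only [vertexWeight_eq_sum, sum_filter, Fintype.sum_sum_type, joinG_adj_inr_inr, bot_adj,
    adj_comm _ (Sum.inr b) (Sum.inl _), joinG_adj_inl_inr, if_true, if_false,
    sum_const_zero, add_zero]
  rfl

theorem IsLocalAntimagic.join (hf : IsLocalAntimagic G f)
    (hc : IsMagicRectangle G.edgeSet.ncard c)
    (hne : ∀ a, 2 * vertexWeight G f a + Fintype.card β *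
      (2 * G.edgeSet.ncard + Fintype.card α * Fintype.card β + 1) ≠
        Fintype.card α * (2 * G.edgeSet.ncard + Fintype.card α * Fintype.card β + 1)) :
    IsLocalAntimagic (joinG G (⊥ : SimpleGraph β)) (joinLabeling f c) := by
  have hbij := bijOn_joinLabeling hf.1 hc.bijOn
  have hcross (a b) : vertexWeight (joinG G (⊥ : SimpleGraph β)) (joinLabeling f c) (.inl a) ≠
      vertexWeight (joinG G (⊥ : SimpleGraph β)) (joinLabeling f c) (.inr b) := by
    rw [vertexWeight_joinLabeling_inl, vertexWeight_joinLabeling_inr]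
    have := hne a
    rw [← hc.two_mul_row_sum a, ← hc.two_mul_col_sum b] at this
    omega
  refine ⟨?_, ?_⟩
  · have hncard := hbij.ncard_eq
    rw [← coe_Icc, Set.ncard_coe_finset, Nat.card_Icc, Nat.add_sub_cancel] at hncard
    rwa [hncard]
  · rintro (a | b) (a' | b') h
    · rw [vertexWeight_joinLabeling_inl, vertexWeight_joinLabeling_inl]
      have := hf.2 (joinG_adj_inl_inl.mp h)
      have := hc.two_mul_row_sum a
      have := hc.two_mul_row_sum a'
      omega
    · exact hcross a b'
    · exact (hcross a' b).symm
    · exact absurd (joinG_adj_inr_inr.mp h) id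

theorem colorCount_joinLabeling_le {e : ℕ} (hc : IsMagicRectangle e c) :
    colorCount (joinG G (⊥ : SimpleGraph β)) (joinLabeling f c) ≤ colorCount G f + 1 := by
  set s := 2 * e + Fintype.card α * Fintype.card β + 1
  have hsub : univ.image (vertexWeight (joinG G (⊥ : SimpleGraph β)) (joinLabeling f c)) ⊆
      insert (Fintype.card α * s / 2)
        ((univ.image (vertexWeight G f)).image (· + Fintype.card β * s / 2)) := by
    rw [image_image, image_subset_iff]
    rintro (a | b) -
    · have hrow : ∑ b, c a b = Fintype.card β * s / 2 :=
        Nat.eq_div_of_mul_eq_right two_ne_zero (hc.two_mul_row_sum a)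
      rw [vertexWeight_joinLabeling_inl, hrow]
      exact mem_insert_of_mem (mem_image_of_mem _ (mem_univ a))
    · have hcol : ∑ a, c a b = Fintype.card α * s / 2 :=
        Nat.eq_div_of_mul_eq_right two_ne_zero (hc.two_mul_col_sum b)
      rw [vertexWeight_joinLabeling_inr, hcol]
      exact mem_insert_self _ _
  exact (card_le_card hsub).trans ((card_insert_le _ _).trans (Nat.succ_le_succ card_image_le))

end Join

/-- Theorem: Let `G` be a graph of order `m ≥ 3` and size `e` with `χ(G) = χ_la(G) = t`.
Suppose there is a local antimagic labeling `f` of `G` with `c(f) = t`. Let `n ≥ 2` with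
`m ≡ n (mod 2)`. If `f⁺(u) ≠ (m−n)(2e+mn+1)/2` for every vertex `u`, then
`χ_la(G ∨ O_n) = χ_la(G) + 1`.  (The inequality is stated multiplied by 2 over `ℤ`, which is
equivalent since `m ≡ n (mod 2)` makes `(m−n)(2e+mn+1)` even.) -/
theorem chiLA_join_nullGraph {V : Type*} [Fintype V] (G : SimpleGraph V) (m n e t : ℕ)
    (hm : Fintype.card V = m) (hm3 : 3 ≤ m)
    (he : G.edgeSet.ncard = e)
    (hchi : G.chromaticNumber = (t : ℕ∞)) (hla : chiLA G = t)
    (f : Sym2 V → ℕ) (hf : IsLocalAntimagic G f) (hcf : colorCount G f = t)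
    (hn : 2 ≤ n) (hpar : m % 2 = n % 2)
    (hne : ∀ u : V,
      2 * (vertexWeight G f u : ℤ) ≠ ((m : ℤ) - (n : ℤ)) * (2 * (e : ℤ) + (m : ℤ) * n + 1)) :
    chiLA (joinG G (⊥ : SimpleGraph (Fin n))) = chiLA G + 1 := by
  subst hm he
  have : Nonempty (Fin n) := ⟨⟨0, by omega⟩⟩
  have hlarge : 4 < Fintype.card V * Fintype.card (Fin n) := by
    rw [Fintype.card_fin]; nlinarith
  have hshell : HasShell 0 (Fintype.card V) (Fintype.card (Fin n)) :=
    hasShell_of_mod_two_eq (by omega) (by rwa [Fintype.card_fin]) hlarge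
      (by rwa [Fintype.card_fin])
  obtain ⟨X, hX⟩ := hshell.exists_isShell
  obtain ⟨c, hc⟩ := hX.exists_isMagicRectangle G.edgeSet.ncard
  have hjoin : IsLocalAntimagic (joinG G (⊥ : SimpleGraph (Fin n))) (joinLabeling f c) :=
    hf.join hc fun u h ↦ hne u (by
      zify at h
      rw [Fintype.card_fin] at h
      linarith)
  refine le_antisymm ?_ ?_
  · rw [hla, ← hcf]
    exact hjoin.chiLA_le.trans (colorCount_joinLabeling_le hc)
  · have hlower : (t + 1 : ℕ∞) ≤ chiLA (joinG G (⊥ : SimpleGraph (Fin n))) :=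
      calc (t + 1 : ℕ∞) = G.chromaticNumber + 1 := by rw [hchi]
        _ ≤ _ := chromaticNumber_add_one_le_chromaticNumber_joinG
        _ ≤ _ := hjoin.chromaticNumber_le_chiLA
    rw [hla]
    exact_mod_cast hlower
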